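/- Let G be a finite abelian group having an internal direct sum decomposition G = G₁ ⊕ H where G₁ is cyclic of order 3m+2 with m ≥ 1 an integer, and suppose |H| is odd. Then N₃(G) ≥ ((2m+1)/(6m+4))·|G| − 1/2. -/

import Mathlib

open Pointwise

/-- `itSum k A` is the `k`-fold sumset `kA = {a₁ + ⋯ + a_k : aᵢ ∈ A}`. -/
def itSum {G : Type*} [AddCommGroup G] : ℕ → Set G → Set G
  | 0, _ => {0}
  | (k + 1), A => itSum k A + A

/-- `Nk G k` is the largest size of an aperiodic subset `A ⊆ G` with `kA ≠ G` which is
maximal with this property; `0` if no such subset exists. -/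
noncomputable def Nk (G : Type*) [AddCommGroup G] (k : ℕ) : ℕ :=
  sSup {m : ℕ | ∃ A : Set G,
    {g : G | g +ᵥ A = A} = {0} ∧
    itSum k A ≠ Set.univ ∧
    (∀ g ∉ A, itSum k (A ∪ {g}) = Set.univ) ∧
    m = A.ncard}

theorem mem_itSum3 {G : Type*} [AddCommGroup G] (A : Set G) (x : G) :
    x ∈ itSum 3 A ↔ ∃ a ∈ A, ∃ b ∈ A, ∃ c ∈ A, a + b + c = x := by
  simp only [itSum, Set.mem_add, Set.mem_singleton_iff]
  constructor
  · rintro ⟨_, ⟨_, ⟨_, rfl, a, ha, rfl⟩, b, hb, rfl⟩, c, hc, rfl⟩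
    exact ⟨a, ha, b, hb, c, hc, by simp⟩
  · rintro ⟨a, ha, b, hb, c, hc, rfl⟩
    exact ⟨a + b, ⟨0 + a, ⟨0, rfl, a, ha, rfl⟩, b, hb, by simp⟩, c, hc, rfl⟩

theorem key {G : Type*} [AddCommGroup G] [Finite G] (A : Set G) (c : G)
    (h : ∀ x, x ∈ itSum 3 A ↔ x ≠ c) : A.ncard ≤ Nk G 3 := by
  have hmono : ∀ B C : Set G, B ⊆ C → itSum 3 B ⊆ itSum 3 C := by
    intro B C hBC x hx
    rw [mem_itSum3] at hx ⊢
    obtain ⟨a, ha, b, hb, d, hd, e⟩ := hx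
    exact ⟨a, hBC ha, b, hBC hb, d, hBC hd, e⟩
  obtain ⟨B, hAB, hB⟩ := (Set.toFinite {B : Set G | c ∉ itSum 3 B}).exists_le_maximal
    (a := A) (by simp [h])
  have hcB : c ∉ itSum 3 B := hB.prop
  have hB' : ∀ x, x ∈ itSum 3 B ↔ x ≠ c := by
    intro x
    constructor
    · rintro hx rfl; exact hcB hx
    · intro hx; exact hmono _ _ hAB ((h x).2 hx)
  refine (Set.ncard_le_ncard hAB (Set.toFinite _)).trans ?_
  apply le_csSup
  · refine ⟨Nat.card G, ?_⟩
    rintro _ ⟨C, -, -, -, rfl⟩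
    rw [← Set.ncard_univ]
    exact Set.ncard_le_ncard (Set.subset_univ _) (Set.toFinite _)
  refine ⟨B, ?_, ?_, ?_, rfl⟩
  · ext g
    simp only [Set.mem_ofPred_eq, Set.mem_singleton_iff]
    constructor
    · intro hg
      by_contra hne
      have h1 : c - g ∈ itSum 3 B := (hB' _).2 (by simpa using hne)
      rw [mem_itSum3] at h1
      obtain ⟨a, ha, b, hb, d, hd, e⟩ := h1
      apply hcB
      rw [mem_itSum3]
      refine ⟨a, ha, b, hb, g + d, ?_, ?_⟩
      · rw [← hg]; exact Set.vadd_mem_vadd_set hd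
      · have : c = a + b + d + g := by rw [← sub_eq_iff_eq_add]; exact e.symm
        rw [this]; abel
    · rintro rfl; simp
  · intro hu
    exact hcB (hu ▸ Set.mem_univ c)
  · intro g hg
    ext x
    simp only [Set.mem_univ, iff_true]
    by_cases hx : x = c
    · by_contra hn
      subst hx
      have := hB.le_of_ge (y := B ∪ {g}) hn Set.subset_union_left
      exact hg (this (by simp))
    · exact hmono _ _ Set.subset_union_left ((hB' x).2 hx)

theorem key2 {G K : Type*} [AddCommGroup G] [Finite G] [AddCommGroup K] (e : G ≃+ K)
    (A : Set K) (c : K)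
    (h : ∀ x, (∃ a ∈ A, ∃ b ∈ A, ∃ d ∈ A, a + b + d = x) ↔ x ≠ c) : A.ncard ≤ Nk G 3 := by
  have := key (e ⁻¹' A) (e.symm c) (by
    intro x
    rw [mem_itSum3, ne_eq, AddEquiv.eq_symm_apply, ← ne_eq, ← h]
    constructor
    · rintro ⟨a, ha, b, hb, d, hd, rfl⟩
      exact ⟨_, ha, _, hb, _, hd, by simp⟩
    · rintro ⟨a, ha, b, hb, d, hd, hx⟩
      exact ⟨e.symm a, by simpa, e.symm b, by simpa, e.symm d, by simpa, by
        apply e.injective; simpa using hx⟩)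
  rwa [Set.ncard_preimage_of_injective_subset_range e.injective (by simp)] at this

theorem exists_P (H : Type*) [AddCommGroup H] [Finite H] (hodd : Odd (Nat.card H)) :
    ∃ P : Finset H, (∀ x ∈ P, -x ∉ P) ∧ Nat.card H ≤ 1 + 2 * P.card := by
  classical
  have := Fintype.ofFinite H
  let e := Fintype.equivFin H
  let P : Finset H := Finset.univ.filter fun x => e x < e (-x)
  have hP : ∀ x, x ∈ P ↔ e x < e (-x) := by simp [P]
  refine ⟨P, ?_, ?_⟩
  · intro x hx hx'
    rw [hP] at hx hx'
    rw [neg_neg] at hx'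
    exact lt_asymm hx hx'
  · have hsub : (Finset.univ : Finset H) ⊆ {0} ∪ (P ∪ P.image (fun x => -x)) := by
      intro x _
      simp only [Finset.mem_union, Finset.mem_singleton, Finset.mem_image]
      rcases lt_trichotomy (e x) (e (-x)) with h | h | h
      · right; left; exact (hP x).2 h
      · left
        have h2 : x = -x := e.injective h
        have h3 : 2 • x = 0 := by rw [two_nsmul]; nth_rewrite 2 [h2]; simp
        have h4 : addOrderOf x ∣ 2 := addOrderOf_dvd_of_nsmul_eq_zero h3
        have h5 : addOrderOf x ∣ Nat.card H := addOrderOf_dvd_natCard x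
        have h6 : Nat.Coprime 2 (Nat.card H) := (Nat.coprime_two_left).2 hodd
        have h7 := Nat.eq_one_of_dvd_coprimes h6 h4 h5
        exact AddMonoid.addOrderOf_eq_one_iff.1 h7
      · right; right; exact ⟨-x, (hP _).2 (by simpa using h), by simp⟩
    have h1 := Finset.card_le_card hsub
    have h2 := Finset.card_union_le {(0 : H)} (P ∪ P.image (fun x => -x))
    have h3 := Finset.card_union_le P (P.image (fun x => -x))
    have h4 := Finset.card_image_le (s := P) (f := fun x => -x)
    rw [Finset.card_univ, ← Nat.card_eq_fintype_card] at h1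
    simp only [Finset.card_singleton] at h2
    omega

/-- The set with level `i` equal to `L i`. -/
def lev {H : Type*} (m r : ℕ) (L : ℕ → Finset H) : Set (ZMod (3 * m + 2) × H) :=
  {x | ∃ i < r, x.1 = (i : ZMod (3 * m + 2)) ∧ x.2 ∈ L i}

theorem ncard_lev {H : Type*} [Finite H] (m r : ℕ) (hr : r ≤ 3 * m + 2) (L : ℕ → Finset H) :
    (lev m r L).ncard = ∑ i ∈ Finset.range r, (L i).card := by
  classical
  rw [← Finset.card_sigma]
  have : lev m r L = (fun x : (Σ _ : ℕ, H) => ((x.1 : ZMod (3 * m + 2)), x.2)) ''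
      (((Finset.range r).sigma L : Finset _) : Set _) := by
    ext ⟨a, b⟩
    simp only [lev, Set.mem_ofPred_eq, Set.mem_image, Finset.mem_coe, Finset.mem_sigma,
      Finset.mem_range, Prod.mk.injEq]
    constructor
    · rintro ⟨i, hi, rfl, hb⟩
      exact ⟨⟨i, b⟩, ⟨hi, hb⟩, rfl, rfl⟩
    · rintro ⟨⟨i, b⟩, ⟨hi, hb⟩, rfl, rfl⟩
      exact ⟨i, hi, rfl, hb⟩
  rw [this, Set.InjOn.ncard_image, Set.ncard_coe_finset]
  rintro ⟨i, a⟩ hi ⟨j, b⟩ hj h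
  simp only [Finset.mem_coe, Finset.mem_sigma, Finset.mem_range] at hi hj
  simp only [Prod.mk.injEq] at h
  obtain ⟨h1, rfl⟩ := h
  rw [ZMod.natCast_eq_natCast_iff', Nat.mod_eq_of_lt (by omega), Nat.mod_eq_of_lt (by omega)] at h1
  subst h1
  rfl

theorem lev_cond {H : Type*} [AddCommGroup H] (m r : ℕ) (hm : 1 ≤ m) (hr : r ≤ m + 2)
    (L : ℕ → Finset H)
    (h1 : ∀ i j k, i < r → j < r → k < r → i + j + k = 3 * m + 1 →
      ∀ a ∈ L i, ∀ b ∈ L j, ∀ c ∈ L k, a + b + c ≠ 0)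
    (h2 : ∀ t h, t ≤ 3 * m + 1 → (t = 3 * m + 1 → h ≠ 0) →
      ∃ i j k, i < r ∧ j < r ∧ k < r ∧ i + j + k = t ∧ 
      ∃ a ∈ L i, ∃ b ∈ L j, ∃ c ∈ L k, a + b + c = h) (x : ZMod (3 * m + 2) × H) :
    (∃ a ∈ lev m r L, ∃ b ∈ lev m r L, ∃ d ∈ lev m r L, a + b + d = x) ↔
      x ≠ (((3 * m + 1 : ℕ) : ZMod (3 * m + 2)), 0) := by
  constructor
  · rintro ⟨⟨_, a⟩, ⟨i, hi, h, ha⟩, ⟨_, b⟩, ⟨j, hj, h', hb⟩, ⟨_, c⟩, ⟨k, hk, h'', hc⟩, rfl⟩ he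
    dsimp only at *
    subst h h' h''
    simp only [Prod.mk_add_mk, Prod.mk.injEq] at he
    obtain ⟨he1, he2⟩ := he
    refine h1 i j k hi hj hk ?_ a ha b hb c hc he2
    have he3 : ((i + j + k : ℕ) : ZMod (3 * m + 2)) = ((3 * m + 1 : ℕ) : ZMod (3 * m + 2)) := by
      rw [← he1]; push_cast; rfl
    rw [ZMod.natCast_eq_natCast_iff', Nat.mod_eq_of_lt (a := 3 * m + 1) (by omega)] at he3
    rcases lt_or_ge (i + j + k) (3 * m + 2) with h | h
    · rwa [Nat.mod_eq_of_lt h] at he3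
    · rw [Nat.mod_eq_sub_mod h, Nat.mod_eq_of_lt (by omega)] at he3
      omega
  · intro hx
    obtain ⟨y, h⟩ := x
    have hy : ((y.val : ℕ) : ZMod (3 * m + 2)) = y := ZMod.natCast_zmod_val y
    have hlt := ZMod.val_lt y
    obtain ⟨i, j, k, hi, hj, hk, hs, a, ha, b, hb, c, hc, hh⟩ := h2 y.val h (by omega) (by
      rintro h3 rfl
      apply hx
      rw [← h3, hy])
    refine ⟨(i, a), ⟨i, hi, rfl, ha⟩, (j, b), ⟨j, hj, rfl, hb⟩, (k, c), ⟨k, hk, rfl, hc⟩, ?_⟩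
    rw [← hy, ← hs, ← hh]
    push_cast
    rfl

theorem case_one {G H : Type*} [AddCommGroup G] [Finite G] [AddCommGroup H] [Finite H] (m : ℕ)
    (hm : 1 ≤ m) (e : G ≃+ ZMod (3 * m + 2) × H) (hn : Nat.card H = 1) : m ≤ Nk G 3 := by
  have hs : Subsingleton H := (Nat.card_eq_one_iff_unique.1 hn).1
  have := key2 e _ _ (lev_cond m (m + 1) hm (by omega) (fun _ => {(0 : H)})
    (by intros; omega)
    (by
      intro t h ht h0
      have ht' : t ≠ 3 * m + 1 := fun h' => h0 h' (Subsingleton.elim _ _)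
      refine ⟨min t m, min (t - m) m, t - m - m, by omega, by omega, by omega, by omega,
        0, by simp, 0, by simp, 0, by simp, Subsingleton.elim _ _⟩))
  rw [ncard_lev _ _ (by omega)] at this
  simp at this
  omega

theorem dec15 : ∀ x : ZMod 5 × ZMod 3,
    (∃ a ∈ ({(0, 0), (1, 1), (2, 2), (1, 0)} : Finset (ZMod 5 × ZMod 3)),
      ∃ b ∈ ({(0, 0), (1, 1), (2, 2), (1, 0)} : Finset (ZMod 5 × ZMod 3)),
      ∃ d ∈ ({(0, 0), (1, 1), (2, 2), (1, 0)} : Finset (ZMod 5 × ZMod 3)), a + b + d = x) ↔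
      x ≠ (1, 2) := by
  decide

theorem case_15 {G H : Type*} [AddCommGroup G] [Finite G] [AddCommGroup H] [Finite H] 
    (e : G ≃+ ZMod 5 × H) (hn : Nat.card H = 3) : 4 ≤ Nk G 3 := by
  have : Fact (Nat.Prime 3) := ⟨by norm_num⟩
  have hc : IsAddCyclic H := isAddCyclic_of_prime_card hn
  have f : ZMod 3 ≃+ H := (ZMod.ringEquivCongr hn.symm).toAddEquiv.trans (zmodAddCyclicAddEquiv hc)
  let e' : G ≃+ ZMod 5 × ZMod 3 := e.trans ((AddEquiv.refl _).prodCongr f.symm)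
  let A : Finset (ZMod 5 × ZMod 3) := {(0, 0), (1, 1), (2, 2), (1, 0)}
  have := key2 e' (A : Set _) (1, 2) dec15
  rw [Set.ncard_coe_finset] at this
  exact this

theorem case_gen {G H : Type*} [AddCommGroup G] [Finite G] [AddCommGroup H] [Finite H] (m : ℕ)
    (hm : 1 ≤ m) (e : G ≃+ ZMod (3 * m + 2) × H) (hodd : Odd (Nat.card H))
    (hn : 3 ≤ Nat.card H) (hn' : 2 ≤ m ∨ 5 ≤ Nat.card H) :
    2 * m * Nat.card H + Nat.card H ≤ 2 * Nk G 3 + 1 := by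
  classical
  have := Fintype.ofFinite H
  obtain ⟨P, hP, hPc⟩ := exists_P H hodd
  have hcard : Nat.card H = Fintype.card H := Nat.card_eq_fintype_card
  let L : ℕ → Finset H := fun i => if i + 2 ≤ m then Finset.univ else if i + 1 = m then {0}ᶜ
    else if i = m then P else {0}
  have L1 : ∀ i, i + 2 ≤ m → L i = Finset.univ := fun i h => by simp [L, h]
  have L2 : L (m - 1) = {0}ᶜ := by
    simp only [L]; rw [if_neg (by omega), if_pos (by omega)]
  have L3 : L m = P := by simp [L]
  have L4 : L (m + 1) = {0} := by
    simp only [L]; rw [if_neg (by omega), if_neg (by omega), if_neg (by omega)]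
  have hex : ∀ h : H, ∃ x : H, x ≠ 0 ∧ x ≠ h := by
    intro h
    have : ∃ x, x ∉ ({0, h} : Finset H) := by
      by_contra! hh
      have h1 : (Finset.univ : Finset H) ⊆ {0, h} := fun x _ => hh x
      have := Finset.card_le_card h1
      have h2 := Finset.card_le_two (a := (0 : H)) (b := h)
      rw [Finset.card_univ] at this
      omega
    simpa using this
  have hPne : P.Nonempty := Finset.card_pos.1 (by omega)
  have Lne : ∀ i, i < m + 2 → (L i).Nonempty := by
    intro i hi
    obtain ⟨x, hx, -⟩ := hex 0
    rcases (by omega : i + 2 ≤ m ∨ i = m - 1 ∨ i = m ∨ i = m + 1) with h | h | h | h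
    · rw [L1 i h]; exact ⟨0, by simp⟩
    · rw [h, L2]; exact ⟨x, by simpa using hx⟩
    · rw [h, L3]; exact hPne
    · rw [h, L4]; simp
  have hPP : ∀ a ∈ P, ∀ b ∈ P, a + b ≠ 0 := by
    intro a ha b hb h
    rw [← neg_eq_iff_add_eq_zero] at h
    exact hP a ha (h ▸ hb)
  have := key2 e _ _ (lev_cond m (m + 2) hm (by omega) L
    (by
      intro i j k hi hj hk hs a ha b hb c hc
      rcases (by omega : (i = m + 1 ∧ j = m ∧ k = m) ∨ (i = m ∧ j = m + 1 ∧ k = m) ∨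
        (i = m ∧ j = m ∧ k = m + 1) ∨ (i = m + 1 ∧ j = m + 1 ∧ k = m - 1) ∨
        (i = m + 1 ∧ j = m - 1 ∧ k = m + 1) ∨ (i = m - 1 ∧ j = m + 1 ∧ k = m + 1))
        with ⟨rfl, rfl, rfl⟩ | ⟨rfl, rfl, rfl⟩ | ⟨rfl, rfl, rfl⟩ | ⟨rfl, rfl, rfl⟩ |
          ⟨rfl, rfl, rfl⟩ | ⟨rfl, rfl, rfl⟩ <;>
      simp only [L2, L3, L4, Finset.mem_singleton, Finset.mem_compl] at ha hb hc <;>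
      first
      | (subst ha; simpa using hPP b hb c hc)
      | (subst hb; simpa using hPP a ha c hc)
      | (subst hc; simpa using hPP a ha b hb)
      | (subst ha hb; simpa using hc)
      | (subst ha hc; simpa using hb)
      | (subst hb hc; simpa using ha))
    (by
      intro t h ht h0
      by_cases ht' : t = 3 * m + 1
      · exact ⟨m + 1, m + 1, m - 1, by omega, by omega, by omega, by omega,
          0, by simp [L4], 0, by simp [L4], h, by simpa [L2] using h0 ht', by simp⟩
      by_cases hm2 : 2 ≤ m
      · obtain ⟨i, j, k, hi, hj, hk, hs⟩ : ∃ i j k, i + 2 ≤ m ∧ j < m + 2 ∧ k < m + 2 ∧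
            i + j + k = t :=
          ⟨t - 2 * (m + 1), min t (m + 1), min (t - (m + 1)) (m + 1), by omega, by omega,
            by omega, by omega⟩
        obtain ⟨b, hb⟩ := Lne j hj
        obtain ⟨c, hc⟩ := Lne k hk
        exact ⟨i, j, k, by omega, hj, hk, hs, h - b - c, by simp [L1 i hi], b, hb, c, hc,
          by abel⟩
      · obtain rfl : m = 1 := by omega
        have L0 : L 0 = {0}ᶜ := L2
        have L4' : L 2 = {0} := L4
        rcases (by omega : t = 0 ∨ t = 1 ∨ t = 2 ∨ t = 3) with rfl | rfl | rfl | rfl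
        · obtain ⟨x, hx, -⟩ := hex 0
          obtain ⟨y, hy, hy'⟩ := hex (h - x)
          exact ⟨0, 0, 0, by omega, by omega, by omega, by omega, x, by simpa [L0] using hx,
            y, by simpa [L0] using hy, h - x - y,
            by simpa [L0, sub_eq_zero] using hy'.symm, by abel⟩
        · obtain ⟨x, hx⟩ := hPne
          obtain ⟨y, hy, hy'⟩ := hex (h - x)
          exact ⟨1, 0, 0, by omega, by omega, by omega, by omega, x, by simpa [L3] using hx,
            y, by simpa [L0] using hy, h - x - y,
            by simpa [L0, sub_eq_zero] using hy'.symm, by abel⟩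
        · obtain ⟨y, hy, hy'⟩ := hex h
          exact ⟨2, 0, 0, by omega, by omega, by omega, by omega, 0, by simp [L4'],
            y, by simpa [L0] using hy, h - y,
            by simpa [L0, sub_eq_zero] using hy'.symm, by abel⟩
        · obtain ⟨y, hy, hy'⟩ := Finset.exists_mem_ne (s := P) (by omega) h
          exact ⟨2, 1, 0, by omega, by omega, by omega, by omega, 0, by simp [L4'],
            y, by simpa [L3] using hy, h - y,
            by simpa [L0, sub_eq_zero] using hy'.symm, by abel⟩))
  rw [ncard_lev _ _ (by omega), Finset.sum_range_succ, Finset.sum_range_succ, L3, L4] at this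
  obtain ⟨q, rfl⟩ : ∃ q, m = q + 1 := ⟨m - 1, by omega⟩
  rw [Finset.sum_range_succ, Finset.sum_congr rfl (g := fun _ => Fintype.card H)
    (fun i hi => by rw [L1 i (by have := Finset.mem_range.1 hi; omega), Finset.card_univ])] at this
  have L2' : L q = {0}ᶜ := L2
  rw [L2', Finset.card_compl] at this
  simp only [Finset.sum_const, Finset.card_range, smul_eq_mul, Finset.card_singleton] at this
  rw [← hcard] at this
  have h3 : 2 * (q + 1) * Nat.card H = 2 * (q * Nat.card H) + 2 * Nat.card H := by ring
  omega

/-- If a finite abelian group `G` decomposes as `G = G₁ ⊕ H` with `G₁` cyclic of order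
`3m+2` (`m ≥ 1`) and `|H|` odd, then `N₃(G) ≥ ((2m+1)/(6m+4))·|G| − 1/2`. -/
theorem stmt11 (G : Type*) [AddCommGroup G] [Finite G] (m : ℕ) (hm : 1 ≤ m)
    (G₁ H : AddSubgroup G) (hcompl : IsCompl G₁ H)
    (hcyc : IsAddCyclic G₁) (hcard : Nat.card G₁ = 3 * m + 2)
    (hodd : Odd (Nat.card H)) :
    (Nk G 3 : ℝ) ≥ (2 * m + 1) / (6 * m + 4) * Nat.card G - 1 / 2 := by
  have hc' : IsCompl (AddSubgroup.toIntSubmodule G₁) (AddSubgroup.toIntSubmodule H) :=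
    (AddSubgroup.toIntSubmodule (M := G)).isCompl_iff.1 hcompl
  let e0 : (G₁ × H) ≃+ G := (Submodule.prodEquivOfIsCompl _ _ hc').toAddEquiv
  let f : ZMod (3 * m + 2) ≃+ G₁ :=
    (ZMod.ringEquivCongr hcard.symm).toAddEquiv.trans (zmodAddCyclicAddEquiv hcyc)
  let e : G ≃+ ZMod (3 * m + 2) × H := e0.symm.trans (f.symm.prodCongr (AddEquiv.refl _))
  have hG : Nat.card G = (3 * m + 2) * Nat.card H := by
    rw [Nat.card_congr e.toEquiv, Nat.card_prod, Nat.card_zmod]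
  have main : 2 * m * Nat.card H + Nat.card H ≤ 2 * Nk G 3 + 1 := by
    by_cases h1 : Nat.card H = 1
    · have := case_one m hm e h1
      rw [h1]; omega
    by_cases h15 : m = 1 ∧ Nat.card H = 3
    · obtain ⟨rfl, h3⟩ := h15
      have := case_15 e h3
      rw [h3]; omega
    · obtain ⟨k, hk⟩ := hodd
      exact case_gen m hm e ⟨k, hk⟩ (by omega) (by omega)
  have main' : 2 * (m : ℝ) * Nat.card H + Nat.card H ≤ 2 * Nk G 3 + 1 := by exact_mod_cast main
  rw [hG]
  push_cast
  have hpos : (6 * (m : ℝ) + 4) ≠ 0 := by positivity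
  have : (2 * (m : ℝ) + 1) / (6 * m + 4) * ((3 * m + 2) * Nat.card H)
      = (2 * m * Nat.card H + Nat.card H) / 2 := by
    field_simp
    ring
  rw [this]
  linarith
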